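/- Let m ≥ 4, let P be a centrally symmetric convex 2m-gon, and let P + X be a k-fold translative tiling of the plane. If v is a vertex of some translate P + x_j (i.e. v ∈ V + X) and G is an edge of some translate P + x_j' having v as one of its two endpoints, then there exist at least ⌈(m−3)/2⌉ distinct indices i such that v ∈ ∂(P) + x_i and G \ {v} ⊆ int(P) + x_i. -/

import Mathlib

open Pointwise

/-- `K + X` is a `k`-fold translative tiling of the plane: the translate multiset
`(x i)` is discrete, every point of the plane belongs to at least `k` of the translates
`K + x i`, and every point belongs to at most `k` of the translates `interior K + x i`
(multiplicity counted over the index set). -/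
def IsKFoldTranslativeTiling {ι : Type} (K : Set (ℝ × ℝ)) (x : ι → ℝ × ℝ) (k : ℕ) : Prop :=
  (∀ R : ℝ, {i : ι | ‖x i‖ ≤ R}.Finite) ∧
  (∀ p : ℝ × ℝ, ∃ s : Finset ι, k ≤ s.card ∧ ∀ i ∈ s, p - x i ∈ K) ∧
  (∀ p : ℝ × ℝ, ∀ s : Finset ι, (∀ i ∈ s, p - x i ∈ interior K) → s.card ≤ k)

/-- `P` is a (two-dimensional) convex polygon whose vertex set is the finite set `V`:
`P` is the convex hull of `V`, every element of `V` is an extreme point of `P`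
(so `V` is exactly the vertex set), and `P` has nonempty interior. -/
def IsConvexPolygon (P : Set (ℝ × ℝ)) (V : Finset (ℝ × ℝ)) : Prop :=
  P = convexHull ℝ (V : Set (ℝ × ℝ)) ∧
  (∀ v ∈ V, v ∈ Set.extremePoints ℝ P) ∧
  (interior P).Nonempty

/-- `P` is symmetric about some point `c`. -/
def IsCentrallySymmetric (P : Set (ℝ × ℝ)) : Prop :=
  ∃ c : ℝ × ℝ, ∀ p ∈ P, 2 • c - p ∈ P

/-- The segment `[a, b]` is an edge of the convex polygon `P` with vertex set `V`. -/
def IsEdge (P : Set (ℝ × ℝ)) (V : Finset (ℝ × ℝ)) (a b : ℝ × ℝ) : Prop :=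
  a ∈ V ∧ b ∈ V ∧ a ≠ b ∧ segment ℝ a b ⊆ frontier P

def dotp (u y : ℝ × ℝ) : ℝ := u.1 * y.1 + u.2 * y.2

lemma dotp_add (u y z : ℝ × ℝ) : dotp u (y + z) = dotp u y + dotp u z := by
  simp [dotp]; ring
lemma dotp_sub (u y z : ℝ × ℝ) : dotp u (y - z) = dotp u y - dotp u z := by
  simp [dotp]; ring
lemma dotp_smul (u y : ℝ × ℝ) (t : ℝ) : dotp u (t • y) = t * dotp u y := by
  simp [dotp]; ring
lemma dotp_neg (u y : ℝ × ℝ) : dotp (-u) y = - dotp u y := by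
  simp [dotp]; ring

lemma exists_support {P : Set (ℝ × ℝ)} (hc : Convex ℝ P) (hne : (interior P).Nonempty)
    {z : ℝ × ℝ} (hz : z ∉ interior P) :
    ∃ u : ℝ × ℝ, u ≠ 0 ∧ (∀ y ∈ P, dotp u y ≤ dotp u z) ∧
      (∀ y ∈ interior P, dotp u y < dotp u z) := by
  obtain ⟨f, hf⟩ := geometric_hahn_banach_open_point hc.interior isOpen_interior hz
  have hfd : ∀ y, dotp (f (1, 0), f (0, 1)) y = f y := by
    intro y
    have : y = y.1 • ((1 : ℝ), (0 : ℝ)) + y.2 • ((0 : ℝ), (1 : ℝ)) := by ext <;> simp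
    conv_rhs => rw [this]
    simp only [map_add, map_smul, smul_eq_mul, dotp]
    ring
  refine ⟨(f (1, 0), f (0, 1)), ?_, ?_, ?_⟩
  · intro h0
    obtain ⟨e, he⟩ := hne
    have h1 := hf e he
    have e0 : ∀ y, f y = 0 := fun y => by rw [← hfd, h0]; simp [dotp]
    rw [e0, e0] at h1
    exact lt_irrefl _ h1
  · intro y hy
    rw [hfd, hfd]
    have hy' : y ∈ closure (interior P) := by
      rw [hc.closure_interior_eq_closure_of_nonempty_interior hne]
      exact subset_closure hy
    have hcl : IsClosed {y | f y ≤ f z} := isClosed_le f.continuous continuous_const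
    exact closure_minimal (fun a ha => (hf a ha).le) hcl hy'
  · intro y hy
    rw [hfd, hfd]
    exact hf y hy

lemma ker_span {u g w : ℝ × ℝ} (hu : u ≠ 0) (hg : g ≠ 0) (h1 : dotp u g = 0)
    (h2 : dotp u w = 0) : ∃ t : ℝ, w = t • g := by
  obtain ⟨a, b⟩ := u
  obtain ⟨g1, g2⟩ := g
  obtain ⟨w1, w2⟩ := w
  simp only [dotp] at h1 h2
  have hdet : w1 * g2 = w2 * g1 := by
    by_cases ha : a = 0
    · have hb : b ≠ 0 := by
        rintro rfl; exact hu (by simp [ha])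
      have e1 : g2 = 0 := by
        subst ha; simpa [hb] using h1
      have e2 : w2 = 0 := by
        subst ha; simpa [hb] using h2
      simp [e1, e2]
    · apply mul_left_cancel₀ ha
      linear_combination g2 * h2 - w2 * h1
  by_cases hg1 : g1 = 0
  · have hg2 : g2 ≠ 0 := by
      rintro rfl; exact hg (by simp [hg1])
    refine ⟨w2 / g2, ?_⟩
    have : w1 = 0 := by
      rw [hg1] at hdet; simpa [hg2] using hdet
    ext <;> simp [hg1, this, hg2]
  · refine ⟨w1 / g1, ?_⟩
    ext
    · simp [hg1]
    · simp only [Prod.smul_mk, smul_eq_mul]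
      field_simp
      linarith

/-- A centrally symmetric polygon (star map `q ↦ d - q`). -/
structure SPoly (P : Set (ℝ × ℝ)) (V : Finset (ℝ × ℝ)) (d : ℝ × ℝ) : Prop where
  conv : Convex ℝ P
  comp : IsCompact P
  ext : ∀ z ∈ V, z ∈ Set.extremePoints ℝ P
  ext' : ∀ z ∈ Set.extremePoints ℝ P, z ∈ V
  sym : ∀ q ∈ P, d - q ∈ P
  ne : (interior P).Nonempty
  hull : P = convexHull ℝ (V : Set (ℝ × ℝ))

/-- `u` is maximal on `P` at the two vertices `p`, `p'`. -/
structure Ed (P : Set (ℝ × ℝ)) (V : Finset (ℝ × ℝ)) (u p p' : ℝ × ℝ) : Prop where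
  une : u ≠ 0
  pne : p ≠ p'
  pV : p ∈ V
  pV' : p' ∈ V
  eq : dotp u p = dotp u p'
  max : ∀ q ∈ P, dotp u q ≤ dotp u p

structure Frame (P : Set (ℝ × ℝ)) (o g n : ℝ × ℝ) : Prop where
  conv : Convex ℝ P
  closed : IsClosed P
  inter : ∀ s a : ℝ, 0 ≤ s → s ≤ 1 → 0 < a → a < 1 → o + s • g + a • n ∈ interior P
  coord : ∀ q ∈ P, ∃ s a : ℝ, q = o + s • g + a • n ∧ 0 ≤ a ∧ a ≤ 1 ∧
    (a = 0 ∨ a = 1 → 0 ≤ s ∧ s ≤ 1)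
  indep : ∀ s a s' a' : ℝ, o + s • g + a • n = o + s' • g + a' • n → s = s' ∧ a = a'

section
variable {P : Set (ℝ × ℝ)} {V : Finset (ℝ × ℝ)} {d u p p' : ℝ × ℝ}

lemma SPoly.sub (H : SPoly P V d) {z : ℝ × ℝ} (hz : z ∈ V) : z ∈ P := (H.ext z hz).1

lemma SPoly.symInt (H : SPoly P V d) {q : ℝ × ℝ} (hq : q ∈ interior P) :
    d - q ∈ interior P := by
  have h1 : (Homeomorph.subLeft d) ⁻¹' P = P := by
    ext y
    simp only [Set.mem_preimage, Homeomorph.coe_subLeft]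
    constructor
    · intro h
      have := H.sym _ h
      simpa using this
    · exact H.sym y
  have h2 := (Homeomorph.subLeft d).preimage_interior P
  rw [h1] at h2
  have : q ∈ (Homeomorph.subLeft d) ⁻¹' interior P := by rw [h2]; exact hq
  simpa using this

lemma SPoly.center (H : SPoly P V d) : (1 / 2 : ℝ) • d ∈ interior P := by
  obtain ⟨e, he⟩ := H.ne
  have := H.conv.interior he (H.symInt he) (by norm_num : (0 : ℝ) ≤ 1 / 2)
    (by norm_num : (0 : ℝ) ≤ 1 / 2) (by norm_num)
  convert this using 1
  module

lemma SPoly.symV (H : SPoly P V d) {z : ℝ × ℝ} (hz : z ∈ V) : d - z ∈ V := by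
  apply H.ext'
  have hz' := H.ext z hz
  refine ⟨H.sym _ hz'.1, ?_⟩
  intro a ha b hb hab
  obtain ⟨s, t, hs, ht, hst, h⟩ := hab
  have := hz'.2 (H.sym _ ha) (H.sym _ hb) ⟨s, t, hs, ht, hst, by
    have e : s • (d - a) + t • (d - b) = (s + t) • d - (s • a + t • b) := by module
    rw [e, h, hst]; simp⟩
  rw [← this]; simp

lemma SPoly.notInt (H : SPoly P V d) {z : ℝ × ℝ} (hz : z ∈ V) : z ∉ interior P := by
  intro hi
  have hz' := H.ext z hz
  have hcont : Filter.Tendsto (fun t : ℝ => z + t • ((1 : ℝ), (0 : ℝ))) (nhds 0) (nhds z) := by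
    have : Continuous (fun t : ℝ => z + t • ((1 : ℝ), (0 : ℝ))) := by fun_prop
    simpa using this.tendsto 0
  have hev : ∀ᶠ t : ℝ in nhds 0, z + t • ((1 : ℝ), (0 : ℝ)) ∈ P :=
    hcont (mem_interior_iff_mem_nhds.1 hi)
  obtain ⟨r, hr, hb⟩ := Metric.eventually_nhds_iff.1 hev
  have h1 := hb (y := r / 2) (by rw [Real.dist_eq, sub_zero, abs_of_pos] <;> linarith)
  have h2 := hb (y := -(r / 2)) (by rw [Real.dist_eq, sub_zero, abs_neg, abs_of_pos] <;> linarith)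
  have := hz'.2 h1 h2 ⟨1 / 2, 1 / 2, by norm_num, by norm_num, by norm_num, by module⟩
  have h3 := congrArg Prod.fst this
  simp at h3
  linarith

lemma SPoly.frontierV (H : SPoly P V d) {z : ℝ × ℝ} (hz : z ∈ V) : z ∈ frontier P := by
  rw [H.comp.isClosed.frontier_eq]
  exact ⟨H.sub hz, H.notInt hz⟩

lemma Ed.lt_center (E : Ed P V u p p') (H : SPoly P V d) :
    dotp u ((1 / 2 : ℝ) • d) < dotp u p := by
  set c := (1 / 2 : ℝ) • d
  have hcont : Filter.Tendsto (fun t : ℝ => c + t • u) (nhds 0) (nhds c) := by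
    have : Continuous (fun t : ℝ => c + t • u) := by fun_prop
    simpa using this.tendsto 0
  have hev : ∀ᶠ t : ℝ in nhds 0, c + t • u ∈ P :=
    hcont (mem_interior_iff_mem_nhds.1 H.center)
  obtain ⟨r, hr, hb⟩ := Metric.eventually_nhds_iff.1 hev
  have h1 := hb (y := r / 2) (by rw [Real.dist_eq, sub_zero, abs_of_pos] <;> linarith)
  have h2 := E.max _ h1
  rw [dotp_add, dotp_smul u u] at h2
  have h3 : 0 < dotp u u := by
    unfold dotp
    by_contra hcon
    have e1 : u.1 = 0 := by nlinarith [mul_self_nonneg u.1, mul_self_nonneg u.2]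
    have e2 : u.2 = 0 := by nlinarith [mul_self_nonneg u.1, mul_self_nonneg u.2]
    exact E.une (Prod.ext e1 e2)
  have := mul_pos (half_pos hr) h3
  linarith

lemma Ed.dn (E : Ed P V u p p') (H : SPoly P V d) : 0 < dotp u (p - (d - p')) := by
  have := E.lt_center H
  rw [dotp_smul] at this
  rw [dotp_sub, dotp_sub, ← E.eq]
  linarith

lemma Ed.dg (E : Ed P V u p p') : dotp u (p' - p) = 0 := by
  rw [dotp_sub, E.eq]; ring

lemma Ed.indep (E : Ed P V u p p') (H : SPoly P V d) (o : ℝ × ℝ) (s a s' a' : ℝ)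
    (h : o + s • (p' - p) + a • (p - (d - p')) = o + s' • (p' - p) + a' • (p - (d - p'))) :
    s = s' ∧ a = a' := by
  have h1 := congrArg (dotp u) h
  simp only [dotp_add, dotp_smul u (p' - p), dotp_smul u (p - (d - p')), E.dg] at h1
  have ha : a = a' := by
    have := (E.dn H).ne'
    apply mul_right_cancel₀ this
    linarith
  subst ha
  refine ⟨?_, rfl⟩
  have h2 : (s - s') • (p' - p) = 0 := by
    have : s • (p' - p) = s' • (p' - p) := by simpa using h
    rw [sub_smul, this, sub_self]
  rcases smul_eq_zero.1 h2 with h3 | h3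
  · linarith
  · exact absurd (sub_eq_zero.1 h3).symm E.pne

lemma Ed.top (E : Ed P V u p p') (H : SPoly P V d) {s : ℝ} (hq : p + s • (p' - p) ∈ P) :
    0 ≤ s ∧ s ≤ 1 := by
  constructor
  · by_contra hs
    push Not at hs
    have h1 := (H.ext p E.pV).2 hq (H.sub E.pV') ⟨1 / (1 - s), -s / (1 - s),
      by apply div_pos <;> linarith, by apply div_pos <;> linarith, by
        have : 1 - s ≠ 0 := by linarith
        field_simp; try ring, by
        have hh : 1 - s ≠ 0 := by linarith
        ext <;> simp <;> field_simp <;> ring⟩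
    have h2 : s • (p' - p) = 0 := by simpa using h1
    rcases smul_eq_zero.1 h2 with h3 | h3
    · linarith
    · exact E.pne (sub_eq_zero.1 h3).symm
  · by_contra hs
    push Not at hs
    have h1 := (H.ext p' E.pV').2 (H.sub E.pV) hq ⟨1 - 1 / s, 1 / s,
      by rw [sub_pos, div_lt_one] <;> linarith, by apply div_pos <;> linarith, by ring, by
        have hh : s ≠ 0 := by linarith
        ext <;> simp <;> field_simp <;> ring⟩
    exact E.pne h1

lemma Ed.coord (E : Ed P V u p p') (H : SPoly P V d) : ∀ q ∈ P, ∃ s a : ℝ,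
    q = (d - p') + s • (p' - p) + a • (p - (d - p')) ∧ 0 ≤ a ∧ a ≤ 1 ∧
    (a = 0 ∨ a = 1 → 0 ≤ s ∧ s ≤ 1) := by
  intro q hq
  set n := p - (d - p') with hn
  have hn0 := E.dn H
  set a := dotp u (q - (d - p')) / dotp u n with ha
  have hk : dotp u (q - (d - p') - a • n) = 0 := by
    have : dotp u n ≠ 0 := hn0.ne'
    rw [dotp_sub, dotp_smul, ha, div_mul_cancel₀ _ this, sub_self]
  obtain ⟨s, hs⟩ := ker_span E.une (sub_ne_zero.2 E.pne.symm) E.dg hk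
  have hqe : q = (d - p') + s • (p' - p) + a • n := by
    rw [← hs]; abel
  have ha0 : 0 ≤ a := by
    apply div_nonneg _ hn0.le
    have := E.max _ (H.sym _ hq)
    rw [dotp_sub] at this
    rw [dotp_sub, dotp_sub, ← E.eq]
    linarith
  have ha1 : a ≤ 1 := by
    rw [ha, div_le_one hn0, dotp_sub, dotp_sub u p]
    linarith [E.max _ hq]
  refine ⟨s, a, hqe, ha0, ha1, ?_⟩
  rintro (h0 | h1)
  · have h2 := H.sym _ hq
    have h3 : d - q = p + (1 - s) • (p' - p) := by
      rw [hqe, h0]; module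
    rw [h3] at h2
    have := E.top H h2
    constructor <;> linarith
  · have h3 : q = p + s • (p' - p) := by
      rw [hqe, h1, hn]; module
    rw [h3] at hq
    exact E.top H hq

lemma Ed.corner (E : Ed P V u p p') (H : SPoly P V d) {z : ℝ × ℝ} (hz : z ∈ V)
    (h1 : z ≠ p) (h2 : z ≠ p') (h3 : z ≠ d - p) (h4 : z ≠ d - p') :
    ∃ s a : ℝ, z = (d - p') + s • (p' - p) + a • (p - (d - p')) ∧ 0 < a ∧ a < 1 := by
  have htop : ∀ z ∈ V, z ≠ p → z ≠ p' → ∀ s : ℝ, 0 ≤ s → s ≤ 1 → z ≠ p + s • (p' - p) := by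
    intro z hz h1 h2 s hs0 hs1 he
    rcases hs0.eq_or_lt with h | h
    · exact h1 (by rw [he, ← h]; simp)
    rcases hs1.eq_or_lt with h' | h'
    · exact h2 (by rw [he, h']; simp)
    have := (H.ext z hz).2 (H.sub E.pV) (H.sub E.pV')
      ⟨1 - s, s, by linarith, h, by ring, by rw [he]; module⟩
    exact h1 this.symm
  obtain ⟨s, a, he, ha0, ha1, hs⟩ := E.coord H z (H.sub hz)
  refine ⟨s, a, he, lt_of_le_of_ne ha0 ?_, lt_of_le_of_ne ha1 ?_⟩
  · intro h
    have hs' := hs (Or.inl h.symm)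
    refine htop (d - z) (H.symV hz) ?_ ?_ (1 - s) (by linarith) (by linarith) ?_
    · intro h; apply h3; rw [← h]; simp
    · intro h; apply h4; rw [← h]; simp
    · rw [he, ← h]; module
  · intro h
    have hs' := hs (Or.inr h)
    refine htop z hz h1 h2 s hs'.1 hs'.2 ?_
    rw [he, h]; module

lemma Ed.frame (E : Ed P V u p p') (H : SPoly P V d) (hV : 5 ≤ V.card) :
    Frame P (d - p') (p' - p) (p - (d - p')) := by
  classical
  have hz : ∃ z ∈ V, z ≠ p ∧ z ≠ p' ∧ z ≠ d - p ∧ z ≠ d - p' := by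
    by_contra hcon
    push Not at hcon
    have hsub : V ⊆ {p, p', d - p, d - p'} := by
      intro z hz
      simp only [Finset.mem_insert, Finset.mem_singleton]
      by_contra h
      push Not at h
      exact h.2.2.2 (hcon z hz h.1 h.2.1 h.2.2.1)
    have := (Finset.card_le_card hsub).trans Finset.card_le_four
    omega
  obtain ⟨z, hzV, h1, h2, h3, h4⟩ := hz
  obtain ⟨s, a, he, ha0, ha1⟩ := E.corner H hzV h1 h2 h3 h4
  have hs : ¬ (0 ≤ s ∧ s ≤ 1) := by
    rintro ⟨hs0, hs1⟩
    have hA : p + s • (p' - p) ∈ P := H.conv (H.sub E.pV) (H.sub E.pV')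
      (by linarith : 0 ≤ 1 - s) hs0 (by ring) |> fun h => by convert h using 1; module
    have hB : (d - p') + s • (p' - p) ∈ P :=
      H.conv (H.sym _ (H.sub E.pV')) (H.sym _ (H.sub E.pV))
      (by linarith : 0 ≤ 1 - s) hs0 (by ring) |> fun h => by convert h using 1; module
    have := (H.ext z hzV).2 hA hB ⟨a, 1 - a, ha0, by linarith, by ring, by rw [he]; module⟩
    have hh : (d - p') + s • (p' - p) + (1 : ℝ) • (p - (d - p')) =
        (d - p') + s • (p' - p) + a • (p - (d - p')) := by
      rw [← he, ← this]; module
    have := (E.indep H _ _ _ _ _ hh).2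
    linarith
  have key : ∃ z ∈ P, ∃ s a : ℝ, z = (d - p') + s • (p' - p) + a • (p - (d - p')) ∧ s < 0 := by
    by_cases hs0 : s < 0
    · exact ⟨z, H.sub hzV, s, a, he, hs0⟩
    · refine ⟨d - z, H.sub (H.symV hzV), 1 - s, 1 - a, by rw [he]; module, ?_⟩
      by_contra hcon
      exact hs ⟨by linarith, by linarith⟩
  obtain ⟨y, hy, s', a', hye, hs'⟩ := key
  have left : ∀ b : ℝ, 0 < b → b < 1 → (d - p') + b • (p - (d - p')) ∈ interior P := by
    intro b hb0 hb1
    by_contra hcon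
    obtain ⟨w, -, hw, hwi⟩ := exists_support H.conv H.ne hcon
    have e1 := hw p (H.sub E.pV)
    have e2 := hw (d - p') (H.sym _ (H.sub E.pV'))
    have e3 := hw p' (H.sub E.pV')
    have e4 := hw y hy
    have e5 := hwi _ H.center
    rw [hye] at e4
    simp only [dotp_add, dotp_sub, dotp_smul] at e1 e2 e3 e4 e5
    have hN : dotp w p - (dotp w d - dotp w p') = 0 := by nlinarith
    rw [hN] at e1 e2 e3 e4 e5
    nlinarith
  refine ⟨H.conv, H.comp.isClosed, ?_, E.coord H, E.indep H _⟩
  intro s a hs0 hs1 ha0 ha1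
  have hL := left a ha0 ha1
  have hR := H.symInt (left (1 - a) (by linarith) (by linarith))
  have := H.conv.interior hL hR (by linarith : 0 ≤ 1 - s) hs0 (by ring)
  convert this using 1
  module

end

/-- `q` is a boundary point and the half-open segment from `q` along `g` is interior. -/
def Lft (P : Set (ℝ × ℝ)) (g q : ℝ × ℝ) : Prop :=
  q ∈ frontier P ∧ ∀ s : ℝ, 0 < s → s ≤ 1 → q + s • g ∈ interior P

section
open Filter Topology
variable {P : Set (ℝ × ℝ)} {o g n : ℝ × ℝ}

lemma Frame.bottom_not_int (F : Frame P o g n) (s : ℝ) : o + s • g ∉ interior P := by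
  intro hi
  have hcont : Tendsto (fun t : ℝ => o + s • g + t • n) (𝓝 0) (𝓝 (o + s • g)) := by
    have : Continuous (fun t : ℝ => o + s • g + t • n) := by fun_prop
    simpa using this.tendsto 0
  have hev : ∀ᶠ t : ℝ in 𝓝 0, o + s • g + t • n ∈ P :=
    hcont (mem_interior_iff_mem_nhds.1 hi)
  obtain ⟨r, hr, hb⟩ := Metric.eventually_nhds_iff.1 hev
  have h2 := hb (y := -(r / 2)) (by rw [Real.dist_eq, sub_zero, abs_neg, abs_of_pos] <;> linarith)
  obtain ⟨s', a', he, ha, -⟩ := F.coord _ h2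
  have := (F.indep _ _ _ _ he).2
  linarith

/-- convexity helper: from `q ∈ P` in direction `h`, reaching the interior at time `T`. -/
lemma toward {P : Set (ℝ × ℝ)} (hc : Convex ℝ P) {q h : ℝ × ℝ} (hq : q ∈ P) {T t : ℝ}
    (hT : q + T • h ∈ interior P) (h0 : 0 < t) (h1 : t ≤ T) : q + t • h ∈ interior P := by
  have hTp : 0 < T := lt_of_lt_of_le h0 h1
  have := hc.combo_self_interior_mem_interior hq hT
    (a := 1 - t / T) (b := t / T) (by rw [sub_nonneg, div_le_one hTp]; exact h1)
    (div_pos h0 hTp) (by ring)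
  convert this using 1
  rw [smul_add, smul_smul, div_mul_cancel₀ _ hTp.ne']
  module

lemma Frame.left (F : Frame P o g n) {s a : ℝ} (hq : o + s • g + a • n ∈ P) (hs : s < 0)
    (ha0 : 0 < a) (ha1 : a < 1) {t : ℝ} (ht0 : 0 < t) (ht1 : t ≤ 1) :
    o + s • g + a • n + t • g ∈ interior P := by
  refine toward F.conv hq (T := 1 - s) ?_ ht0 (by linarith)
  have := F.inter 1 a (by norm_num) le_rfl ha0 ha1
  convert this using 1
  module

lemma Frame.right (F : Frame P o g n) {s a : ℝ} (hq : o + s • g + a • n ∈ P) (hs : 1 < s)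
    (ha0 : 0 < a) (ha1 : a < 1) {t : ℝ} (ht0 : 0 < t) (ht1 : t ≤ 1) :
    o + s • g + a • n + t • (-g) ∈ interior P := by
  refine toward F.conv hq (T := s) ?_ ht0 (by linarith)
  have := F.inter 0 a le_rfl (by norm_num) ha0 ha1
  convert this using 1
  module

lemma Frame.dich (F : Frame P o g n) {s a : ℝ} (hq : o + s • g + a • n ∈ frontier P)
    (ha0 : 0 < a) (ha1 : a < 1) :
    Lft P g (o + s • g + a • n) ∨ Lft P (-g) (o + s • g + a • n) := by
  have hq' := hq
  rw [F.closed.frontier_eq] at hq'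
  by_cases h0 : s < 0
  · exact Or.inl ⟨hq, fun t h1 h2 => F.left hq'.1 h0 ha0 ha1 h1 h2⟩
  by_cases h1 : 1 < s
  · exact Or.inr ⟨hq, fun t h2 h3 => F.right hq'.1 h1 ha0 ha1 h2 h3⟩
  exact absurd (F.inter s a (by linarith) (by linarith) ha0 ha1) hq'.2

def Good (P : Set (ℝ × ℝ)) (o g q : ℝ × ℝ) : Prop :=
  q ∈ interior P ∨ Lft P g q ∨ (q ∈ segment ℝ o (o + g) ∧ q ≠ o + g)

/-- an open condition which holds after a small step along `g` survives a smaller step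
along `n`. -/
lemma ev_open {U : Set (ℝ × ℝ)} (hU : IsOpen U) {q g n : ℝ × ℝ}
    (h : ∀ᶠ e : ℝ in 𝓝[>] 0, q + e • g ∈ U) :
    ∀ᶠ e : ℝ in 𝓝[>] 0, ∀ᶠ t : ℝ in 𝓝[>] 0, q + e • g + t • n ∈ U := by
  filter_upwards [h] with e he
  have hcont : Tendsto (fun t : ℝ => q + e • g + t • n) (𝓝 0) (𝓝 (q + e • g)) := by
    have : Continuous (fun t : ℝ => q + e • g + t • n) := by fun_prop
    simpa using this.tendsto 0
  exact nhdsWithin_le_nhds (hcont (hU.mem_nhds he))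

lemma ev_open0 {U : Set (ℝ × ℝ)} (hU : IsOpen U) {q g n : ℝ × ℝ} (h : q ∈ U) :
    ∀ᶠ e : ℝ in 𝓝[>] 0, ∀ᶠ t : ℝ in 𝓝[>] 0, q + e • g + t • n ∈ U := by
  apply ev_open hU
  have hcont : Tendsto (fun t : ℝ => q + t • g) (𝓝 0) (𝓝 q) := by
    have : Continuous (fun t : ℝ => q + t • g) := by fun_prop
    simpa using this.tendsto 0
  exact nhdsWithin_le_nhds (hcont (hU.mem_nhds h))

lemma ev_Ioo {b : ℝ} (hb : 0 < b) : ∀ᶠ e : ℝ in 𝓝[>] 0, 0 < e ∧ e < b :=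
  Ioo_mem_nhdsGT hb

lemma Frame.good (F : Frame P o g n) {q : ℝ × ℝ} (h : Good P o g q) :
    ∀ᶠ e : ℝ in 𝓝[>] 0, ∀ᶠ t : ℝ in 𝓝[>] 0, q + e • g + t • n ∈ interior P := by
  rcases h with h | h | ⟨h, h'⟩
  · exact ev_open0 isOpen_interior h
  · apply ev_open isOpen_interior
    filter_upwards [ev_Ioo one_pos] with e he
    exact h.2 e he.1 he.2.le
  · rw [segment_eq_image'] at h
    obtain ⟨s, ⟨hs0, hs1⟩, rfl⟩ := h
    simp only [add_sub_cancel_left] at h' ⊢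
    have hs : s < 1 := lt_of_le_of_ne hs1 (by rintro rfl; simp at h')
    filter_upwards [ev_Ioo (sub_pos.2 hs)] with e he
    filter_upwards [ev_Ioo one_pos] with t ht
    have := F.inter (s + e) t (by linarith) (by linarith) ht.1 ht.2
    convert this using 1
    module

lemma Frame.bad (F : Frame P o g n) {q : ℝ × ℝ} (h : ¬ Good P o g q) :
    ∀ᶠ e : ℝ in 𝓝[>] 0, ∀ᶠ t : ℝ in 𝓝[>] 0, q + e • g + t • n ∈ Pᶜ := by
  by_cases hq : q ∈ P
  swap
  · exact ev_open0 F.closed.isOpen_compl hq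
  have hi : q ∉ interior P := fun hh => h (Or.inl hh)
  have hf : q ∈ frontier P := by rw [F.closed.frontier_eq]; exact ⟨hq, hi⟩
  obtain ⟨s, a, he, ha0, ha1, hs⟩ := F.coord q hq
  rcases ha0.eq_or_lt with h0 | h0
  · obtain ⟨hs0, hs1⟩ := hs (Or.inl h0.symm)
    have hs' : s = 1 := by
      by_contra hne
      refine h (Or.inr (Or.inr ⟨?_, ?_⟩))
      · rw [segment_eq_image']
        exact ⟨s, ⟨hs0, hs1⟩, by rw [he, ← h0]; simp⟩
      · intro hh
        apply hne
        refine (F.indep s a 1 0 ?_).1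
        rw [← he, hh]; simp
    apply ev_open F.closed.isOpen_compl
    filter_upwards [ev_Ioo one_pos] with e hee hmem
    obtain ⟨s', a', he', -, -, hs''⟩ := F.coord _ hmem
    have := F.indep (1 + e) 0 s' a' (by rw [← he', he, ← h0, hs']; module)
    have := hs'' (Or.inl this.2.symm)
    linarith
  rcases ha1.eq_or_lt with h1 | h1
  · filter_upwards with e
    filter_upwards [ev_Ioo one_pos] with t ht hmem
    obtain ⟨s', a', he', -, ha', -⟩ := F.coord _ hmem
    have := F.indep (s + e) (a + t) s' a' (by rw [← he', he]; module)
    linarith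
  · apply ev_open F.closed.isOpen_compl
    filter_upwards [ev_Ioo one_pos] with e hee hmem
    by_cases hs0 : s < 0
    · exact h (Or.inr (Or.inl ⟨hf, fun t h2 h3 => he ▸ F.left (he ▸ hq) hs0 h0 h1 h2 h3⟩))
    by_cases hs1 : 1 < s
    · have := toward F.conv (q := q + e • g) (h := -g) hmem (T := e + (s - 1)) (t := e) (by
        have := F.inter 1 a (by norm_num) le_rfl h0 h1
        convert this using 1
        rw [he]; module) hee.1 (by linarith)
      apply hi
      convert this using 1
      module
    · exact hi (he ▸ F.inter s a (by linarith) (by linarith) h0 h1)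

open Classical in
/-- number of indices in `T` for which `v - x i` satisfies `p`. -/
noncomputable def cnt {ι : Type} (T : Finset ι) (x : ι → ℝ × ℝ) (v : ℝ × ℝ)
    (p : ℝ × ℝ → Prop) : ℕ := (T.filter (fun i => p (v - x i))).card

lemma cnt_or {ι : Type} (T : Finset ι) (x : ι → ℝ × ℝ) (v : ℝ × ℝ)
    (p q : ℝ × ℝ → Prop) (h : ∀ y, p y → q y → False) :
    cnt T x v (fun y => p y ∨ q y) = cnt T x v p + cnt T x v q := by
  classical
  unfold cnt
  rw [← Finset.card_union_of_disjoint]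
  · congr 1
    ext i
    simp only [Finset.mem_filter, Finset.mem_union]
    tauto
  · rw [Finset.disjoint_left]
    intro i hi hj
    exact h _ (Finset.mem_filter.1 hi).2 (Finset.mem_filter.1 hj).2

lemma cnt_congr {ι : Type} (T : Finset ι) (x : ι → ℝ × ℝ) (v : ℝ × ℝ)
    (p q : ℝ × ℝ → Prop) (h : ∀ y, p y ↔ q y) : cnt T x v p = cnt T x v q := by
  congr 1; funext y; exact propext (h y)

lemma cnt_mono {ι : Type} (T : Finset ι) (x : ι → ℝ × ℝ) (v : ℝ × ℝ)
    (p q : ℝ × ℝ → Prop) (h : ∀ y, p y → q y) : cnt T x v p ≤ cnt T x v q := by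
  classical
  apply Finset.card_le_card
  intro i hi
  rw [Finset.mem_filter] at hi ⊢
  exact ⟨hi.1, h _ hi.2⟩

lemma Frame.count (F : Frame P o g n) {ι : Type} {x : ι → ℝ × ℝ} {k : ℕ}
    (ht : IsKFoldTranslativeTiling P x k) (v : ℝ × ℝ) (T : Finset ι)
    (hT : ∀ i, ∀ y ∈ Metric.ball v 1, y - x i ∈ P → i ∈ T) :
    cnt T x v (Good P o g) = k := by
  classical
  have h1 : ∀ i ∈ T, ∀ᶠ e : ℝ in 𝓝[>] 0, ∀ᶠ t : ℝ in 𝓝[>] 0,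
      (Good P o g (v - x i) → (v + e • g + t • n) - x i ∈ interior P) ∧
      (¬ Good P o g (v - x i) → (v + e • g + t • n) - x i ∉ P) := by
    intro i _
    have e0 : ∀ e t : ℝ, (v + e • g + t • n) - x i = (v - x i) + e • g + t • n := by
      intros; abel
    simp only [e0]
    by_cases hg : Good P o g (v - x i)
    · simpa [hg] using F.good hg
    · simpa [hg] using F.bad hg
  have h2 : ∀ᶠ e : ℝ in 𝓝[>] 0, ∀ᶠ t : ℝ in 𝓝[>] 0, v + e • g + t • n ∈ Metric.ball v 1 :=
    ev_open0 Metric.isOpen_ball (Metric.mem_ball_self one_pos)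
  have h3 := (Filter.eventually_all_finset T).2 h1
  obtain ⟨e, h4, h5⟩ := (h3.and h2).exists
  have h6 := (Filter.eventually_all_finset T).2 h4
  obtain ⟨t, h7, h8⟩ := (h6.and h5).exists
  obtain ⟨-, hlow, hup⟩ := ht
  apply le_antisymm
  · apply hup (v + e • g + t • n)
    intro i hi
    rw [Finset.mem_filter] at hi
    exact (h7 i hi.1).1 hi.2
  · obtain ⟨s, hs, hsP⟩ := hlow (v + e • g + t • n)
    refine hs.trans (Finset.card_le_card ?_)
    intro i hi
    have hiT := hT i _ h8 (hsP i hi)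
    rw [Finset.mem_filter]
    refine ⟨hiT, ?_⟩
    by_contra hb
    exact (h7 i hiT).2 hb (hsP i hi)

lemma Frame.eqn (F : Frame P o g n) {ι : Type} {x : ι → ℝ × ℝ} {k : ℕ}
    (ht : IsKFoldTranslativeTiling P x k) (v : ℝ × ℝ) (T : Finset ι)
    (hT : ∀ i, ∀ y ∈ Metric.ball v 1, y - x i ∈ P → i ∈ T) :
    cnt T x v (· ∈ interior P) + cnt T x v (Lft P g) + cnt T x v (· ∈ segment ℝ o (o + g))
      = k + cnt T x v (· = o + g) := by
  have h1 := F.count ht v T hT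
  have hseg : ∀ y ∈ segment ℝ o (o + g), ∃ s : ℝ, y = o + s • g := by
    intro y hy
    rw [segment_eq_image'] at hy
    obtain ⟨s, -, rfl⟩ := hy
    exact ⟨s, by simp⟩
  have h2 : cnt T x v (Good P o g) = cnt T x v (· ∈ interior P) + (cnt T x v (Lft P g) +
      cnt T x v (fun q => q ∈ segment ℝ o (o + g) ∧ q ≠ o + g)) := by
    rw [← cnt_or, ← cnt_or]
    · rfl
    · rintro y hy (h | ⟨h, -⟩)
      · exact h.1.2 hy
      · obtain ⟨s, rfl⟩ := hseg y h
        exact F.bottom_not_int _ hy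
    · rintro y hy ⟨h, -⟩
      obtain ⟨s, rfl⟩ := hseg y h
      have := hy.2 1 one_pos le_rfl
      apply F.bottom_not_int (s + 1)
      convert this using 1
      module
  have h3 : cnt T x v (· ∈ segment ℝ o (o + g)) =
      cnt T x v (fun q => q ∈ segment ℝ o (o + g) ∧ q ≠ o + g) + cnt T x v (· = o + g) := by
    rw [← cnt_or]
    · apply cnt_congr
      intro y
      constructor
      · intro h
        by_cases hy : y = o + g
        · exact Or.inr hy
        · exact Or.inl ⟨h, hy⟩
      · rintro (h | rfl)
        · exact h.1
        · exact right_mem_segment ℝ _ _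
    · rintro y ⟨-, h⟩ h'
      exact h h'
  omega

end

section
open Filter Topology
variable {P : Set (ℝ × ℝ)} {V : Finset (ℝ × ℝ)} {d u p p' : ℝ × ℝ}

lemma Ed.swap (E : Ed P V u p p') : Ed P V u p' p :=
  ⟨E.une, E.pne.symm, E.pV', E.pV, E.eq.symm, fun q hq => E.eq ▸ E.max q hq⟩

lemma Ed.star (E : Ed P V u p p') (H : SPoly P V d) : Ed P V (-u) (d - p) (d - p') := by
  refine ⟨neg_ne_zero.2 E.une, ?_, H.symV E.pV, H.symV E.pV', ?_, ?_⟩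
  · intro h; exact E.pne (sub_right_injective h)
  · rw [dotp_neg, dotp_neg, dotp_sub, dotp_sub, E.eq]
  · intro q hq
    have := E.max _ (H.sym q hq)
    rw [dotp_sub] at this
    rw [dotp_neg, dotp_neg, dotp_sub]
    linarith

lemma Ed.eqns (E : Ed P V u p p') (H : SPoly P V d) (hV : 5 ≤ V.card)
    {ι : Type} {x : ι → ℝ × ℝ} {k : ℕ}
    (ht : IsKFoldTranslativeTiling P x k) (v : ℝ × ℝ) (T : Finset ι)
    (hT : ∀ i, ∀ y ∈ Metric.ball v 1, y - x i ∈ P → i ∈ T) :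
    ∃ N Sb St : ℕ,
      N + cnt T x v (Lft P (p' - p)) + Sb = k + cnt T x v (· = d - p) ∧
      N + cnt T x v (Lft P (-(p' - p))) + Sb = k + cnt T x v (· = d - p') ∧
      N + cnt T x v (Lft P (-(p' - p))) + St = k + cnt T x v (· = p) ∧
      N + cnt T x v (Lft P (p' - p)) + St = k + cnt T x v (· = p') := by
  have F1 := (E.frame H hV).eqn ht v T hT
  have F2 := (E.swap.frame H hV).eqn ht v T hT
  have F3 := ((E.star H).frame H hV).eqn ht v T hT
  have F4 := ((E.star H).swap.frame H hV).eqn ht v T hT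
  refine ⟨cnt T x v (· ∈ interior P), cnt T x v (· ∈ segment ℝ (d - p') (d - p)),
    cnt T x v (· ∈ segment ℝ p p'), ?_, ?_, ?_, ?_⟩
  · rw [show d - p' + (p' - p) = d - p by abel] at F1
    exact F1
  · rw [show d - p + (p - p') = d - p' by abel, show p - p' = -(p' - p) by abel,
      segment_symm] at F2
    exact F2
  · rw [show d - (d - p') + (d - p' - (d - p)) = p by abel,
      show d - p' - (d - p) = -(p' - p) by abel, show d - (d - p') = p' by abel,
      segment_symm] at F3
    exact F3
  · rw [show d - (d - p) + (d - p - (d - p')) = p' by abel,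
      show d - p - (d - p') = p' - p by abel, show d - (d - p) = p by abel] at F4
    exact F4

lemma SPoly.max_of (H : SPoly P V d) {u : ℝ × ℝ} {M : ℝ} (h : ∀ z ∈ V, dotp u z ≤ M) :
    ∀ q ∈ P, dotp u q ≤ M := by
  have hc : Convex ℝ {q | dotp u q ≤ M} := by
    intro a ha b hb s t hs ht hst
    simp only [Set.mem_ofPred_eq] at ha hb ⊢
    rw [dotp_add, dotp_smul, dotp_smul]
    calc s * dotp u a + t * dotp u b ≤ s * M + t * M := by gcongr
      _ = M := by rw [← add_mul, hst, one_mul]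
  intro q hq
  rw [H.hull] at hq
  exact convexHull_min (fun z hz => h z hz) hc hq

/-- A function on the vertices which agrees on the two ends of every edge is constant. -/
lemma SPoly.const (H : SPoly P V d) (C : ℝ × ℝ → ℕ)
    (hC : ∀ u p p', Ed P V u p p' → C p = C p') : ∀ z ∈ V, ∀ z' ∈ V, C z = C z' := by
  classical
  intro z hz z' hz'
  have hVne : V.Nonempty := ⟨z, hz⟩
  choose f hfV hf using fun u : ℝ × ℝ => V.exists_max_image (dotp u) hVne
  -- two maximizers have the same value
  have hsame : ∀ u : ℝ × ℝ, u ≠ 0 → ∀ y ∈ V, (∀ q ∈ V, dotp u q ≤ dotp u y) → C y = C (f u) := by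
    intro u hu y hy hmax
    by_cases hyf : y = f u
    · rw [hyf]
    · refine hC u y (f u) ⟨hu, hyf, hy, hfV u, ?_, H.max_of hmax⟩
      exact le_antisymm (hf u y hy) (hmax _ (hfV u))
  let S := {u : ℝ × ℝ // u ≠ 0}
  have hconn : IsConnected ({0}ᶜ : Set (ℝ × ℝ)) := by
    apply isConnected_compl_singleton_of_one_lt_rank
    rw [rank_prod', Module.rank_self]
    norm_num
  have : PreconnectedSpace S := Subtype.preconnectedSpace hconn.isPreconnected
  have hloc : IsLocallyConstant (fun u : S => C (f u.1)) := by
    rw [IsLocallyConstant.iff_eventually_eq]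
    intro u
    have h1 : ∀ y ∈ V, ∀ᶠ w : S in 𝓝 u, dotp u.1 y < dotp u.1 (f u.1) →
        dotp w.1 y < dotp w.1 (f u.1) := by
      intro y _
      by_cases hlt : dotp u.1 y < dotp u.1 (f u.1)
      · have hc1 : Continuous fun w : S => dotp w.1 y := by unfold dotp; fun_prop
        have hc2 : Continuous fun w : S => dotp w.1 (f u.1) := by unfold dotp; fun_prop
        have := (isOpen_lt hc1 hc2).mem_nhds hlt
        filter_upwards [this] with w hw _
        exact hw
      · simp [hlt]
    filter_upwards [(Filter.eventually_all_finset V).2 h1] with w hw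
    apply hsame u.1 u.2 _ (hfV w.1)
    intro q hq
    refine (hf u.1 q hq).trans ?_
    by_contra hcon
    push Not at hcon
    have := hw _ (hfV w.1) hcon
    have h2 := hf w.1 _ (hfV u.1)
    linarith
  have hrep : ∀ z ∈ V, ∃ u : S, C z = C (f u.1) := by
    intro z hz
    obtain ⟨u, hu, hm, -⟩ := exists_support H.conv H.ne (H.notInt hz)
    exact ⟨⟨u, hu⟩, hsame u hu z hz fun q hq => hm q (H.sub hq)⟩
  obtain ⟨u1, h1⟩ := hrep z hz
  obtain ⟨u2, h2⟩ := hrep z' hz'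
  rw [h1, h2]
  exact hloc.apply_eq_of_preconnectedSpace u1 u2

lemma cnt_or_le {ι : Type} (T : Finset ι) (x : ι → ℝ × ℝ) (v : ℝ × ℝ)
    (p q : ℝ × ℝ → Prop) :
    cnt T x v (fun y => p y ∨ q y) ≤ cnt T x v p + cnt T x v q := by
  classical
  unfold cnt
  refine (Finset.card_le_card ?_).trans (Finset.card_union_le _ _)
  intro i hi
  simp only [Finset.mem_filter, Finset.mem_union] at hi ⊢
  tauto

lemma cnt_sum {ι : Type} (T : Finset ι) (x : ι → ℝ × ℝ) (v : ℝ × ℝ) :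
    cnt T x v (· ∈ V) = ∑ z ∈ V, cnt T x v (· = z) := by
  classical
  unfold cnt
  rw [Finset.card_eq_sum_card_fiberwise (f := fun i => v - x i) (t := V)]
  · apply Finset.sum_congr rfl
    intro z hz
    congr 1
    ext i
    simp only [Finset.mem_filter]
    constructor
    · rintro ⟨⟨h1, -⟩, h3⟩; exact ⟨h1, h3⟩
    · rintro ⟨h1, h3⟩; exact ⟨⟨h1, h3 ▸ hz⟩, h3⟩
  · intro i hi
    rw [Finset.mem_coe] at hi
    simp only [Finset.mem_filter] at hi
    exact hi.2

end

/-- Lemma 1: let `m ≥ 4`, let `P` be a centrally symmetric convex `2m`-gon and let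
`P + X` be a `k`-fold translative tiling of the plane. If `v` is a vertex of the
translate `P + x j` and `[v, w]` is an edge of the translate `P + x j'`, then there are
at least `⌈(m-3)/2⌉` distinct indices `i` such that `v ∈ ∂(P) + x i` and
`[v, w] \ {v} ⊆ int(P) + x i`. -/
theorem edge_covered_by_interiors (m : ℕ) (hm : 4 ≤ m)
    (P : Set (ℝ × ℝ)) (V : Finset (ℝ × ℝ))
    (hP : IsConvexPolygon P V) (hV : V.card = 2 * m) (hsym : IsCentrallySymmetric P)
    (k : ℕ) (hk : 0 < k) (ι : Type) (x : ι → ℝ × ℝ)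
    (htile : IsKFoldTranslativeTiling P x k)
    (v : ℝ × ℝ) (j : ι) (hv : v - x j ∈ V)
    (w : ℝ × ℝ) (j' : ι) (hG : IsEdge P V (v - x j') (w - x j')) :
    ∃ s : Finset ι, (m - 3 + 1) / 2 ≤ s.card ∧
      ∀ i ∈ s, v - x i ∈ frontier P ∧
        ∀ p ∈ segment ℝ v w \ {v}, p - x i ∈ interior P := by

  classical
  obtain ⟨hull, hext, hne⟩ := hP
  obtain ⟨c, hc⟩ := hsym
  have hcomp : IsCompact P := by
    rw [hull]; exact V.finite_toSet.isCompact_convexHull (𝕜 := ℝ)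
  have H : SPoly P V (2 • c) := by
    refine ⟨by rw [hull]; exact convex_convexHull ℝ _, hcomp, hext, ?_, hc, hne, hull⟩
    intro z hz
    rw [hull] at hz
    exact extremePoints_convexHull_subset hz
  set d := 2 • c
  have hV5 : 5 ≤ V.card := by omega
  -- the relevant finite set of indices
  obtain ⟨B, hB⟩ := hcomp.isBounded.exists_norm_le
  set T : Finset ι := (htile.1 (‖v‖ + 1 + B)).toFinset with hTdef
  have hT : ∀ i, ∀ y ∈ Metric.ball v 1, y - x i ∈ P → i ∈ T := by
    intro i y hy hyP
    rw [hTdef, Set.Finite.mem_toFinset, Set.mem_ofPred_eq]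
    have h1 := hB _ hyP
    rw [mem_ball_iff_norm] at hy
    have e : x i = v + (y - v) - (y - x i) := by abel
    rw [e]
    calc ‖v + (y - v) - (y - x i)‖ ≤ ‖v + (y - v)‖ + ‖y - x i‖ := norm_sub_le _ _
      _ ≤ ‖v‖ + ‖y - v‖ + ‖y - x i‖ := by gcongr; exact norm_add_le _ _
      _ ≤ ‖v‖ + 1 + B := by gcongr
  -- the edge
  obtain ⟨hpV, hpV', hpne, hseg⟩ := hG
  set p := v - x j' with hp
  set p' := w - x j' with hp'
  obtain ⟨u, E⟩ : ∃ u, Ed P V u p p' := by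
    have hmid : midpoint ℝ p p' ∉ interior P :=
      (hseg (midpoint_mem_segment p p')).2
    obtain ⟨u, hu, hm, -⟩ := exists_support H.conv hne hmid
    have e : midpoint ℝ p p' = (1 / 2 : ℝ) • p + (1 / 2 : ℝ) • p' := by
      rw [midpoint_eq_smul_add, smul_add]; norm_num
    rw [e] at hm
    simp only [dotp_add, dotp_smul] at hm
    have h1 := hm p (H.sub hpV)
    have h2 := hm p' (H.sub hpV')
    refine ⟨u, hu, hpne, hpV, hpV', by linarith, fun q hq => ?_⟩
    have := hm q hq
    linarith
  have hg : p' - p = w - v := by rw [hp, hp']; abel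
  -- counts
  set C : ℝ × ℝ → ℕ := fun z => cnt T x v (· = z) with hCdef
  have hconst : ∀ z ∈ V, ∀ z' ∈ V, C z + C (d - z) = C z' + C (d - z') := by
    apply H.const (fun z => C z + C (d - z))
    intro u p p' E
    obtain ⟨N, Sb, St, h1, h2, h3, h4⟩ := E.eqns H hV5 htile v T hT
    simp only [hCdef]
    omega
  have hsum : 2 * ∑ z ∈ V, C z = V.card * (C p + C (d - p)) := by
    have hs : ∑ z ∈ V, C (d - z) = ∑ z ∈ V, C z :=
      Finset.sum_nbij' (fun z => d - z) (fun z => d - z) (fun z hz => H.symV hz)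
        (fun z hz => H.symV hz) (by simp) (by simp) (by simp)
    have : ∑ z ∈ V, (C z + C (d - z)) = ∑ z ∈ V, (C p + C (d - p)) :=
      Finset.sum_congr rfl fun z hz => hconst z hz p hpV
    rw [Finset.sum_add_distrib, hs, Finset.sum_const, smul_eq_mul] at this
    linarith
  have hcpos : 1 ≤ C p + C (d - p) := by
    rw [hconst p hpV _ hv]
    have : 0 < C (v - x j) := by
      apply Finset.card_pos.2
      refine ⟨j, ?_⟩
      simp only [Finset.mem_filter]
      exact ⟨hT j v (Metric.mem_ball_self one_pos) (H.sub hv), trivial⟩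
    omega
  have hbound : ∑ z ∈ V, C z ≤ cnt T x v (Lft P (p' - p)) + (cnt T x v (Lft P (-(p' - p))) +
      (C p + (C p' + (C (d - p) + C (d - p'))))) := by
    rw [← cnt_sum]
    refine (cnt_mono T x v (· ∈ V) (fun y => Lft P (p' - p) y ∨ Lft P (-(p' - p)) y ∨
      y = p ∨ y = p' ∨ y = d - p ∨ y = d - p') ?_).trans ?_
    · intro y hy
      by_cases h1 : y = p
      · tauto
      by_cases h2 : y = p'
      · tauto
      by_cases h3 : y = d - p
      · tauto
      by_cases h4 : y = d - p'
      · tauto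
      obtain ⟨s, a, he, ha0, ha1⟩ := E.corner H hy h1 h2 h3 h4
      have := (E.frame H hV5).dich (he ▸ H.frontierV hy) ha0 ha1
      rw [← he] at this
      tauto
    · refine (cnt_or_le _ _ _ _ _).trans (Nat.add_le_add_left ?_ _)
      refine (cnt_or_le _ _ _ _ _).trans (Nat.add_le_add_left ?_ _)
      refine (cnt_or_le _ _ _ _ _).trans (Nat.add_le_add_left ?_ _)
      refine (cnt_or_le _ _ _ _ _).trans (Nat.add_le_add_left ?_ _)
      exact cnt_or_le _ _ _ _ _
  obtain ⟨N, Sb, St, h1, h2, h3, h4⟩ := E.eqns H hV5 htile v T hT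
  have h5 := hconst p hpV p' hpV'
  refine ⟨T.filter (fun i => Lft P (p' - p) (v - x i)), ?_, ?_⟩
  · change _ ≤ cnt T x v (Lft P (p' - p))
    change _ = _ + C (d - p) at h1
    change _ = _ + C (d - p') at h2
    rw [hV] at hsum
    set c0 := C p + C (d - p) with hc0
    have h6 : ∑ z ∈ V, C z = m * c0 := by
      have : 2 * ∑ z ∈ V, C z = 2 * (m * c0) := by rw [hsum]; ring
      omega
    obtain ⟨r, rfl⟩ : ∃ r, m = r + 3 := ⟨m - 3, by omega⟩
    have h7 : r ≤ r * c0 := Nat.le_mul_of_pos_right _ hcpos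
    have h8 : (r + 3) * c0 = r * c0 + 3 * c0 := by ring
    omega
  · intro i hi
    have hL := (Finset.mem_filter.1 hi).2
    refine ⟨hL.1, ?_⟩
    rintro y ⟨hy, hyv⟩
    rw [segment_eq_image'] at hy
    obtain ⟨s, ⟨hs0, hs1⟩, rfl⟩ := hy
    have hs : 0 < s := lt_of_le_of_ne hs0 (by rintro rfl; simp at hyv)
    have := hL.2 s hs hs1
    rw [hg] at this
    change v + s • (w - v) - x i ∈ interior P
    rw [add_sub_right_comm]
    exact this
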